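/- arXiv:2112.03582 — 2 statements merged into one kernel-verified Lean document; each statement's English description precedes it below -/
import Mathlib

section
/- Conditional relative entropy is functorial with respect to vertical composition. Precisely: let X, Y, X', Y', X'', Y'' be finite sets; p a probability distribution on X; f : X ⇝ Y, f' : X' ⇝ Y', f'' : X'' ⇝ Y'' channels; μ : X → X', μ' : X' → X'', ν : Y → Y', ν' : Y' → Y'' functions; t : Y' ⇝ Y a stochastic section of ν and t' : Y'' ⇝ Y' a stochastic section of ν'; such that ν∘f = f'∘μ and ν'∘f' = f''∘μ' as channels. Let p' = μ∘p. Then, as an identity in [0,∞], ∑_{x∈X} p_x D( f^x, ((t∘t')∘f''∘(μ'∘μ))^x ) = ∑_{x∈X} p_x D( f^x, (t∘f'∘μ)^x ) + ∑_{x'∈X'} p'_{x'} D( f'^{x'}, (t'∘f''∘μ')^{x'} ). -/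
/-!
Relative entropy satisfies a chain rule along a stochastic section `t` of `ν`: for distributions
`a` on `Y` and `c` on `Y'`, `D(a, t∘c) = D(a, t∘ν∘a) + D(ν∘a, c)`. Indeed `t∘c` takes the value
`t y (ν y) * c (ν y)` at `y`, so `log (a y / (t∘c) y)` splits as
`log (a y / (t∘ν∘a) y) + log ((ν∘a) (ν y) / c (ν y))`, and averaging a function of `ν y` against
`a` is averaging it against `ν∘a`. The left-hand side is finite exactly when both terms on the
right are, and finite terms add up in `[0, ∞]` because of Gibbs' inequality.

Averaging over `p` gives the chain rule for conditional relative entropy. Since `ν∘f = f'∘μ`, and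
conditioning on `μ∘p` amounts to precomposing both channels with `μ` and conditioning on `p`, the
second term becomes the conditional relative entropy of `f'` with respect to `t'∘f''∘μ'`.
-/

open scoped ENNReal BigOperators

/-- A probability distribution on a finite set `X`. -/
def IsDist {X : Type*} [Fintype X] (p : X → ℝ) : Prop :=
  (∀ x, 0 ≤ p x) ∧ ∑ x, p x = 1

/-- A channel from `X` to `Y`; `f y x` is the probability of output `y` given input `x`. -/
def IsChannel {X Y : Type*} [Fintype Y] (f : Y → X → ℝ) : Prop :=
  (∀ y x, 0 ≤ f y x) ∧ ∀ x, ∑ y, f y x = 1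

/-- Composite of channels: `(g ∘ f) z x = ∑ y, g z y * f y x`. -/
noncomputable def chComp {X Y Z : Type*} [Fintype Y]
    (g : Z → Y → ℝ) (f : Y → X → ℝ) : Z → X → ℝ :=
  fun z x => ∑ y, g z y * f y x

/-- The pure (deterministic) channel associated to a function. -/
def pureCh {X Y : Type*} [DecidableEq Y] (φ : X → Y) : Y → X → ℝ :=
  fun y x => if y = φ x then 1 else 0

/-- Pushforward of a distribution along a channel. -/
noncomputable def push {X Y : Type*} [Fintype X] (f : Y → X → ℝ) (p : X → ℝ) : Y → ℝ :=
  fun y => ∑ x, f y x * p x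

/-- The identity channel. -/
def idChan {X : Type*} [DecidableEq X] : X → X → ℝ :=
  fun x x' => if x = x' then 1 else 0

/-- `s : Y ⇝ X` is a stochastic section of `φ : X → Y` if it is a channel and `φ ∘ s = id_Y`. -/
def IsSection {X Y : Type*} [Fintype X] [Fintype Y] [DecidableEq Y]
    (φ : X → Y) (s : X → Y → ℝ) : Prop :=
  IsChannel s ∧ chComp (pureCh φ) s = idChan

open scoped Classical in
/-- Relative entropy `D(p,q) ∈ [0,∞]`, with the conventions `0·log(0/q) = 0` and
`p·log(p/0) = ∞` for `p ≠ 0`. -/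
noncomputable def relEnt {X : Type*} [Fintype X] (p q : X → ℝ) : ℝ≥0∞ :=
  if ∀ x, p x ≠ 0 → q x ≠ 0 then
    ENNReal.ofReal (∑ x, if p x = 0 then 0 else p x * Real.log (p x / q x))
  else ⊤

open Function

section Channels

variable {W X Y Z : Type*}

theorem IsChannel.isDist [Fintype Y] {f : Y → X → ℝ} (hf : IsChannel f) (x : X) :
    IsDist (fun y => f y x) :=
  ⟨fun y => hf.1 y x, hf.2 x⟩

theorem IsDist.push [Fintype X] [Fintype Y] {f : Y → X → ℝ} {p : X → ℝ}
    (hp : IsDist p) (hf : IsChannel f) : IsDist (push f p) := by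
  refine ⟨fun y => Finset.sum_nonneg fun x _ => mul_nonneg (hf.1 y x) (hp.1 x), ?_⟩
  calc ∑ y, ∑ x, f y x * p x = ∑ x, (∑ y, f y x) * p x := by
        rw [Finset.sum_comm]; simp only [Finset.sum_mul]
    _ = 1 := by simp only [hf.2, one_mul, hp.2]

theorem IsChannel.chComp [Fintype Y] [Fintype Z] {g : Z → Y → ℝ} {f : Y → X → ℝ}
    (hg : IsChannel g) (hf : IsChannel f) : IsChannel (chComp g f) :=
  ⟨fun z x => ((hf.isDist x).push hg).1 z, fun x => ((hf.isDist x).push hg).2⟩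

theorem isChannel_pureCh [Fintype Y] [DecidableEq Y] (φ : X → Y) : IsChannel (pureCh φ) := by
  refine ⟨fun y x => ?_, fun x => by simp [pureCh]⟩
  unfold pureCh
  positivity

theorem chComp_assoc [Fintype X] [Fintype Y] (h : Z → Y → ℝ) (g : Y → X → ℝ) (f : X → W → ℝ) :
    chComp (chComp h g) f = chComp h (chComp g f) :=
  Matrix.mul_assoc h g f

theorem chComp_pureCh [Fintype Y] [DecidableEq Y] (g : Z → Y → ℝ) (φ : X → Y) :
    chComp g (pureCh φ) = fun z x => g z (φ x) := by
  ext z x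
  simp [chComp, pureCh]

theorem pureCh_comp [Fintype Y] [DecidableEq Y] [DecidableEq Z] (ψ : Y → Z) (φ : X → Y) :
    pureCh (ψ ∘ φ) = chComp (pureCh ψ) (pureCh φ) := by
  rw [chComp_pureCh]
  rfl

end Channels

section Pushforward

variable {X Y : Type*} [Fintype X] [DecidableEq Y]

theorem push_pureCh (φ : X → Y) (p : X → ℝ) (y : Y) :
    push (pureCh φ) p y = ∑ x with φ x = y, p x := by
  simp only [push, pureCh, ite_mul, one_mul, zero_mul, Finset.sum_filter, eq_comm]

theorem support_push_pureCh (φ : X → Y) {p : X → ℝ} (hp : ∀ x, 0 ≤ p x) :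
    support (push (pureCh φ) p) = φ '' support p := by
  ext y
  rw [mem_support, push_pureCh, Ne, Finset.sum_eq_zero_iff_of_nonneg fun x _ => hp x]
  simp [and_comm]

theorem sum_push_pureCh_mul [Fintype Y] (φ : X → Y) (p : X → ℝ) (g : Y → ℝ) :
    ∑ y, push (pureCh φ) p y * g y = ∑ x, p x * g (φ x) := by
  simp only [push_pureCh, Finset.sum_mul]
  rw [← Finset.sum_fiberwise Finset.univ φ]
  exact Finset.sum_congr rfl fun y _ => Finset.sum_congr rfl (by simp +contextual)

theorem sum_ofReal_push_pureCh_mul [Fintype Y] (φ : X → Y) {p : X → ℝ} (hp : ∀ x, 0 ≤ p x)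
    (g : Y → ℝ≥0∞) :
    ∑ y, ENNReal.ofReal (push (pureCh φ) p y) * g y = ∑ x, ENNReal.ofReal (p x) * g (φ x) := by
  simp only [push_pureCh, ENNReal.ofReal_sum_of_nonneg fun x _ => hp x, Finset.sum_mul]
  rw [← Finset.sum_fiberwise Finset.univ φ]
  exact Finset.sum_congr rfl fun y _ => Finset.sum_congr rfl (by simp +contextual)

end Pushforward

namespace IsSection

variable {X Y : Type*} [Fintype X] [Fintype Y] [DecidableEq Y] {φ : X → Y} {s : X → Y → ℝ}

theorem apply_eq_zero (hs : IsSection φ s) {x : X} {y : Y} (h : φ x ≠ y) : s x y = 0 := by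
  have hsum : push (pureCh φ) (fun x => s x y) (φ x) = 0 :=
    (congrFun₂ hs.2 (φ x) y).trans (if_neg h)
  rw [push_pureCh, Finset.sum_eq_zero_iff_of_nonneg fun x _ => hs.1.1 x y] at hsum
  exact hsum x (by simp)

theorem push_apply (hs : IsSection φ s) (c : Y → ℝ) (x : X) :
    push s c x = s x (φ x) * c (φ x) :=
  Finset.sum_eq_single (φ x) (fun y _ h => by rw [hs.apply_eq_zero h.symm, zero_mul]) (by simp)

theorem support_subset_support_push_iff (hs : IsSection φ s) {a : X → ℝ} (ha : ∀ x, 0 ≤ a x)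
    (c : Y → ℝ) :
    support a ⊆ support (push s c) ↔
      support a ⊆ support (push s (push (pureCh φ) a)) ∧
        support (push (pureCh φ) a) ⊆ support c := by
  have hpos (x : X) (hx : x ∈ support a) : push (pureCh φ) a (φ x) ≠ 0 := by
    rw [← mem_support, support_push_pureCh φ ha]
    exact Set.mem_image_of_mem φ hx
  rw [support_push_pureCh φ ha, Set.image_subset_iff, ← Set.subset_inter_iff]
  refine forall₂_congr fun x hx => ?_
  simp [hs.push_apply, hpos x hx]

end IsSection

theorem sub_le_mul_log_div {a b : ℝ} (ha : 0 ≤ a) (hb : 0 ≤ b) (hab : a ≠ 0 → b ≠ 0) :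
    a - b ≤ a * Real.log (a / b) := by
  rcases ha.eq_or_lt with rfl | ha
  · simpa using hb
  have hb : 0 < b := hb.lt_of_ne' (hab ha.ne')
  calc a - b = a * (1 - (a / b)⁻¹) := by field_simp
    _ ≤ a * Real.log (a / b) := by
      gcongr
      exact Real.one_sub_inv_le_log_of_pos (div_pos ha hb)

section RelativeEntropy

variable {X Y : Type*} [Fintype X]

theorem sum_mul_log_div_nonneg {p q : X → ℝ} (hp : ∀ x, 0 ≤ p x) (hq : ∀ x, 0 ≤ q x)
    (hsum : ∑ x, q x ≤ ∑ x, p x) (h : support p ⊆ support q) :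
    0 ≤ ∑ x, p x * Real.log (p x / q x) :=
  calc 0 ≤ ∑ x, (p x - q x) := by simpa using hsum
    _ ≤ ∑ x, p x * Real.log (p x / q x) :=
      Finset.sum_le_sum fun x _ => sub_le_mul_log_div (hp x) (hq x) (@h x)

theorem relEnt_of_support_subset {p q : X → ℝ} (h : support p ⊆ support q) :
    relEnt p q = ENNReal.ofReal (∑ x, p x * Real.log (p x / q x)) := by
  refine (if_pos h).trans ?_
  congr! 2 with x
  split_ifs with hx <;> simp [hx]

theorem relEnt_of_not_support_subset {p q : X → ℝ} (h : ¬ support p ⊆ support q) :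
    relEnt p q = ⊤ :=
  if_neg h

variable [Fintype Y] [DecidableEq Y] {φ : X → Y} {s : X → Y → ℝ}

theorem IsSection.sum_mul_log_div_push (hs : IsSection φ s) {a : X → ℝ} {c : Y → ℝ}
    (hsub : support a ⊆ support (push s (push (pureCh φ) a)))
    (hsub' : support (push (pureCh φ) a) ⊆ support c) :
    ∑ x, a x * Real.log (a x / push s c x) =
      ∑ x, a x * Real.log (a x / push s (push (pureCh φ) a) x) +
        ∑ y, push (pureCh φ) a y * Real.log (push (pureCh φ) a y / c y) := by
  rw [sum_push_pureCh_mul φ a fun y => Real.log (push (pureCh φ) a y / c y),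
    ← Finset.sum_add_distrib]
  refine Finset.sum_congr rfl fun x _ => ?_
  rcases eq_or_ne (a x) 0 with hx | hx
  · simp [hx]
  have hsb : s x (φ x) * push (pureCh φ) a (φ x) ≠ 0 := hs.push_apply _ x ▸ hsub hx
  obtain ⟨hs₀, hb⟩ := mul_ne_zero_iff.mp hsb
  have hc : c (φ x) ≠ 0 := hsub' hb
  rw [hs.push_apply, hs.push_apply, ← mul_add, ← Real.log_mul (by positivity) (by positivity)]
  congr 2
  field_simp

theorem IsSection.relEnt_push (hs : IsSection φ s) {a : X → ℝ} {c : Y → ℝ}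
    (ha : IsDist a) (hc : IsDist c) :
    relEnt a (push s c) =
      relEnt a (push s (push (pureCh φ) a)) + relEnt (push (pureCh φ) a) c := by
  have hb : IsDist (push (pureCh φ) a) := ha.push (isChannel_pureCh φ)
  have hsb : IsDist (push s (push (pureCh φ) a)) := hb.push hs.1
  have hiff := hs.support_subset_support_push_iff ha.1 c
  by_cases hsub : support a ⊆ support (push s c)
  · obtain ⟨h₁, h₂⟩ := hiff.mp hsub
    rw [relEnt_of_support_subset hsub, relEnt_of_support_subset h₁, relEnt_of_support_subset h₂,
      hs.sum_mul_log_div_push h₁ h₂, ENNReal.ofReal_add]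
    · exact sum_mul_log_div_nonneg ha.1 hsb.1 (hsb.2.trans ha.2.symm).le h₁
    · exact sum_mul_log_div_nonneg hb.1 hc.1 (hc.2.trans hb.2.symm).le h₂
  · rw [relEnt_of_not_support_subset hsub]
    rcases not_and_or.mp (hiff.not.mp hsub) with h | h <;>
      simp [relEnt_of_not_support_subset h]

end RelativeEntropy

/-- The conditional relative entropy `∑ x, p x * D(f^x, g^x)` of a channel `f` with respect to a
channel `g`, given a distribution `p` on their common source. -/
noncomputable def condRelEnt {X Y : Type*} [Fintype X] [Fintype Y] (p : X → ℝ)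
    (f g : Y → X → ℝ) : ℝ≥0∞ :=
  ∑ x, ENNReal.ofReal (p x) * relEnt (fun y => f y x) (fun y => g y x)

section ConditionalRelativeEntropy

variable {X Y X' Y' : Type*} [Fintype X] [Fintype Y] [Fintype X'] [Fintype Y'] {p : X → ℝ}

theorem condRelEnt_push_pureCh [DecidableEq X'] (hp : ∀ x, 0 ≤ p x) (μ : X → X')
    (f g : Y → X' → ℝ) :
    condRelEnt (push (pureCh μ) p) f g =
      condRelEnt p (chComp f (pureCh μ)) (chComp g (pureCh μ)) := by
  simp only [condRelEnt, chComp_pureCh]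
  exact sum_ofReal_push_pureCh_mul μ hp fun x' => relEnt (fun y => f y x') fun y => g y x'

theorem IsSection.condRelEnt_chComp [DecidableEq Y'] {ν : Y → Y'} {t : Y → Y' → ℝ}
    (ht : IsSection ν t) {f : Y → X → ℝ} {g : Y' → X → ℝ}
    (hf : IsChannel f) (hg : IsChannel g) :
    condRelEnt p f (chComp t g) =
      condRelEnt p f (chComp t (chComp (pureCh ν) f)) + condRelEnt p (chComp (pureCh ν) f) g := by
  simp only [condRelEnt, ← Finset.sum_add_distrib, ← mul_add]
  exact Finset.sum_congr rfl fun x _ =>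
    congrArg _ (ht.relEnt_push (hf.isDist x) (hg.isDist x))

theorem condRelEnt_vertical_comp_general [DecidableEq X'] [DecidableEq Y'] (hp : ∀ x, 0 ≤ p x)
    {f : Y → X → ℝ} {f' g' : Y' → X' → ℝ} {μ : X → X'} {ν : Y → Y'} {t : Y → Y' → ℝ}
    (hf : IsChannel f) (hg' : IsChannel g') (ht : IsSection ν t)
    (hcomm : chComp (pureCh ν) f = chComp f' (pureCh μ)) :
    condRelEnt p f (chComp t (chComp g' (pureCh μ))) =
      condRelEnt p f (chComp t (chComp f' (pureCh μ))) +
        condRelEnt (push (pureCh μ) p) f' g' := by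
  rw [condRelEnt_push_pureCh hp, ← hcomm,
    ht.condRelEnt_chComp hf (hg'.chComp (isChannel_pureCh μ))]

end ConditionalRelativeEntropy

/-- Conditional relative entropy is functorial with respect to vertical composition. -/
theorem condRelEnt_vertical_comp {X Y X' Y' X'' Y'' : Type*}
    [Fintype X] [Fintype Y] [Fintype X'] [Fintype Y'] [Fintype X''] [Fintype Y'']
    [DecidableEq X'] [DecidableEq Y'] [DecidableEq X''] [DecidableEq Y'']
    (p : X → ℝ) (f : Y → X → ℝ) (f' : Y' → X' → ℝ) (f'' : Y'' → X'' → ℝ)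
    (μ : X → X') (μ' : X' → X'') (ν : Y → Y') (ν' : Y' → Y'')
    (t : Y → Y' → ℝ) (t' : Y' → Y'' → ℝ)
    (hp : IsDist p) (hf : IsChannel f) (hf' : IsChannel f') (hf'' : IsChannel f'')
    (ht : IsSection ν t) (ht' : IsSection ν' t')
    (hcomm : chComp (pureCh ν) f = chComp f' (pureCh μ))
    (hcomm' : chComp (pureCh ν') f' = chComp f'' (pureCh μ')) :
    (∑ x, ENNReal.ofReal (p x) *
        relEnt (fun y => f y x)
          (fun y => chComp (chComp t t') (chComp f'' (pureCh (μ' ∘ μ))) y x))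
      = (∑ x, ENNReal.ofReal (p x) *
          relEnt (fun y => f y x) (fun y => chComp t (chComp f' (pureCh μ)) y x))
        + ∑ x', ENNReal.ofReal (push (pureCh μ) p x') *
            relEnt (fun y' => f' y' x')
              (fun y' => chComp t' (chComp f'' (pureCh μ')) y' x') := by
  have hg' : IsChannel (chComp t' (chComp f'' (pureCh μ'))) :=
    ht'.1.chComp (hf''.chComp (isChannel_pureCh μ'))
  simpa only [condRelEnt, pureCh_comp, chComp_assoc] using
    condRelEnt_vertical_comp_general hp.1 hf hg' ht hcomm
end

section
/- 2-relative entropy is lower semicontinuous. Precisely: fix finite sets X, Y, X', Y', functions μ : X → X' and ν : Y → Y', a channel f : X ⇝ Y, and a channel f' : X' ⇝ Y' with ν∘f = f'∘μ. Let (p_n) be a sequence of probability distributions on X converging pointwise to p, let (s_n) be stochastic sections of μ converging pointwise to a stochastic section s of μ, and let (t_n) be stochastic sections of ν converging pointwise to a stochastic section t of ν. Then D(p, s∘μ∘p) + ∑_{x∈X} p_x D(f^x, (t∘f'∘μ)^x) ≤ liminf_{n→∞} [ D(p_n, s_n∘μ∘p_n) + ∑_{x∈X} (p_n)_x D(f^x,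 (t_n∘f'∘μ)^x) ], as an inequality in [0,∞]. -/
open scoped ENNReal BigOperators

/-!
For nonnegative `p` and `q`, normalised or not, relative entropy is the Legendre transform
`D(p, q) = sup_c ∑ x, (p x * (c x + 1) - q x * exp (c x))` over `c : X → ℝ`, truncated below at `0`.
The optimum is at `c = log (p / q)`, approached in the limit `c x → -∞` where `p x = 0` and
`c x → ∞` where `p x ≠ 0 = q x`. Each function under the supremum is continuous in `(p, q)`, so `D`
is lower semicontinuous, and so are its compositions with continuous maps, their products with
`p x`, and sums of these.
-/

open Filter Set Topology

section LowerSemicontinuous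

variable {Z : Type*} [TopologicalSpace Z] {S : Set Z}

lemma le_liminf_comp_of_lowerSemicontinuousOn {ι γ : Type*} [CompleteLinearOrder γ]
    {F : Z → γ} (hF : LowerSemicontinuousOn F S) {l : Filter ι} {u : ι → Z} {z : Z}
    (hu : Tendsto u l (𝓝 z)) (huS : ∀ᶠ i in l, u i ∈ S) (hz : z ∈ S) :
    F z ≤ liminf (F ∘ u) l :=
  (lowerSemicontinuousOn_iff_le_liminf.1 hF z hz).trans
    (tendsto_nhdsWithin_iff.2 ⟨hu, huS⟩).liminf_le_liminf_comp

lemma lowerSemicontinuousOn_ennreal_mul {u v : Z → ℝ≥0∞} (hu : LowerSemicontinuousOn u S)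
    (hv : LowerSemicontinuousOn v S) : LowerSemicontinuousOn (fun z ↦ u z * v z) S := by
  rw [lowerSemicontinuousOn_iff_le_liminf] at hu hv ⊢
  exact fun z hz ↦ (mul_le_mul' (hu z hz) (hv z hz)).trans ENNReal.le_liminf_mul

end LowerSemicontinuous

section RelEnt

variable {X : Type*} [Fintype X] {p q : X → ℝ}

lemma relEnt_of_ne_zero_imp (h : ∀ x, p x ≠ 0 → q x ≠ 0) :
    relEnt p q = ENNReal.ofReal (∑ x, p x * Real.log (p x / q x)) := by
  rw [relEnt, if_pos h]
  congr! 2 with x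
  split_ifs with hx <;> simp [hx]

lemma relEnt_eq_top_of_ne_zero_of_eq_zero {x : X} (hp : p x ≠ 0) (hq : q x = 0) :
    relEnt p q = ⊤ :=
  if_neg fun h ↦ h x hp hq

/-- The functional whose supremum over `c` is the relative entropy of `p` and `q`
(`relEnt_eq_iSup_relEntDual`), normalised so that the optimal `c` is `log (p / q)`. -/
noncomputable def relEntDual (c p q : X → ℝ) : ℝ :=
  ∑ x, (p x * (c x + 1) - q x * Real.exp (c x))

lemma continuous_relEntDual (c : X → ℝ) :
    Continuous fun z : (X → ℝ) × (X → ℝ) ↦ relEntDual c z.1 z.2 := by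
  unfold relEntDual
  fun_prop

lemma mul_add_one_sub_mul_exp_le_mul_log_div {a b : ℝ} (ha : 0 ≤ a) (hb : 0 ≤ b)
    (hab : a ≠ 0 → b ≠ 0) (c : ℝ) : a * (c + 1) - b * Real.exp c ≤ a * Real.log (a / b) := by
  rcases ha.eq_or_lt with rfl | ha
  · simpa using mul_nonneg hb (Real.exp_pos c).le
  · have hb : 0 < b := hb.lt_of_ne' (hab ha.ne')
    have hexp : c - Real.log (a / b) + 1 ≤ Real.exp c / (a / b) := by
      simpa [Real.exp_sub, Real.exp_log (div_pos ha hb)]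
        using Real.add_one_le_exp (c - Real.log (a / b))
    have hscaled : a * (c - Real.log (a / b) + 1) ≤ b * Real.exp c :=
      calc a * (c - Real.log (a / b) + 1) ≤ a * (Real.exp c / (a / b)) := by gcongr
        _ = b * Real.exp c := by field_simp
    linarith

lemma ofReal_relEntDual_le_relEnt (hp : 0 ≤ p) (hq : 0 ≤ q) (c : X → ℝ) :
    ENNReal.ofReal (relEntDual c p q) ≤ relEnt p q := by
  by_cases h : ∀ x, p x ≠ 0 → q x ≠ 0
  · rw [relEnt_of_ne_zero_imp h]
    exact ENNReal.ofReal_le_ofReal <| Finset.sum_le_sum fun x _ ↦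
      mul_add_one_sub_mul_exp_le_mul_log_div (hp x) (hq x) (h x) (c x)
  · push Not at h
    obtain ⟨x, hpx, hqx⟩ := h
    simp [relEnt_eq_top_of_ne_zero_of_eq_zero hpx hqx]

lemma tendsto_relEntDual_atBot (hp : 0 ≤ p) (hq : 0 ≤ q) (h : ∀ x, p x ≠ 0 → q x ≠ 0) :
    Tendsto (fun r ↦ relEntDual (fun x ↦ if p x = 0 then r else Real.log (p x / q x)) p q)
      atBot (𝓝 (∑ x, p x * Real.log (p x / q x))) := by
  refine tendsto_finsetSum _ fun x _ ↦ ?_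
  by_cases hpx : p x = 0
  · simpa [hpx] using (Real.tendsto_exp_atBot.const_mul (q x)).neg
  · have hqx : q x ≠ 0 := h x hpx
    have hpos : 0 < p x / q x := div_pos ((hp x).lt_of_ne' hpx) ((hq x).lt_of_ne' hqx)
    have hval : p x * (Real.log (p x / q x) + 1) - q x * (p x / q x) =
        p x * Real.log (p x / q x) := by
      field_simp
      ring
    simp only [hpx, if_false, Real.exp_log hpos, hval, tendsto_const_nhds_iff]

lemma tendsto_relEntDual_single_atTop [DecidableEq X] {x : X} (hp : 0 < p x) (hq : q x = 0) :
    Tendsto (fun r ↦ relEntDual (Pi.single x r) p q) atTop atTop := by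
  have hexp (r : ℝ) (y : X) : q y * Real.exp (Pi.single (M := fun _ ↦ ℝ) x r y) = q y := by
    rcases eq_or_ne y x with rfl | hyx <;> simp [*]
  have hval (r : ℝ) : relEntDual (Pi.single x r) p q = p x * r + ∑ y, (p y - q y) := by
    calc relEntDual (Pi.single x r) p q
        = ∑ y, (p y * Pi.single (M := fun _ ↦ ℝ) x r y + (p y - q y)) := by
          simp only [relEntDual, hexp, mul_add, mul_one, add_sub_assoc]
      _ = p x * r + ∑ y, (p y - q y) := by
          simp [Finset.sum_add_distrib, Pi.single_apply]
  simp only [hval]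
  exact tendsto_atTop_add_const_right _ _ (tendsto_id.const_mul_atTop hp)

theorem relEnt_eq_iSup_relEntDual (hp : 0 ≤ p) (hq : 0 ≤ q) :
    relEnt p q = ⨆ c, ENNReal.ofReal (relEntDual c p q) := by
  classical
  refine le_antisymm ?_ (iSup_le (ofReal_relEntDual_le_relEnt hp hq))
  have hle (c : X → ℝ) := le_iSup (fun c ↦ ENNReal.ofReal (relEntDual c p q)) c
  by_cases h : ∀ x, p x ≠ 0 → q x ≠ 0
  · rw [relEnt_of_ne_zero_imp h]
    exact le_of_tendsto' (ENNReal.tendsto_ofReal (tendsto_relEntDual_atBot hp hq h))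
      fun _ ↦ hle _
  · push Not at h
    obtain ⟨x, hpx, hqx⟩ := h
    rw [relEnt_eq_top_of_ne_zero_of_eq_zero hpx hqx]
    have hpos : 0 < p x := (hp x).lt_of_ne' hpx
    exact le_of_tendsto'
      (ENNReal.tendsto_ofReal_atTop.comp (tendsto_relEntDual_single_atTop hpos hqx))
      fun _ ↦ hle _

theorem lowerSemicontinuousOn_relEnt {Z : Type*} [TopologicalSpace Z] {S : Set Z}
    {P Q : Z → X → ℝ} (hP : ContinuousOn P S) (hQ : ContinuousOn Q S)
    (hP_nonneg : ∀ z ∈ S, 0 ≤ P z) (hQ_nonneg : ∀ z ∈ S, 0 ≤ Q z) :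
    LowerSemicontinuousOn (fun z ↦ relEnt (P z) (Q z)) S := by
  have hsup : LowerSemicontinuousOn
      (fun z ↦ ⨆ c, ENNReal.ofReal (relEntDual c (P z) (Q z))) S :=
    lowerSemicontinuousOn_iSup fun c ↦ (ENNReal.continuous_ofReal.comp_continuousOn
      ((continuous_relEntDual c).comp_continuousOn (hP.prodMk hQ))).lowerSemicontinuousOn
  exact fun z hz ↦ LowerSemicontinuousWithinAt.congr_of_eventuallyEq (hsup z hz) hz <|
    eventuallyEq_nhdsWithin_of_eqOn fun w hw ↦
      (relEnt_eq_iSup_relEntDual (hP_nonneg w hw) (hQ_nonneg w hw)).symm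

end RelEnt

section Nonneg

variable {X Y Z : Type*}

lemma push_nonneg [Fintype X] {f : Y → X → ℝ} {p : X → ℝ} (hf : 0 ≤ f) (hp : 0 ≤ p) :
    0 ≤ push f p :=
  fun y ↦ Finset.sum_nonneg fun x _ ↦ mul_nonneg (hf y x) (hp x)

lemma chComp_nonneg [Fintype Y] {g : Z → Y → ℝ} {f : Y → X → ℝ} (hg : 0 ≤ g) (hf : 0 ≤ f) :
    0 ≤ chComp g f :=
  fun z x ↦ Finset.sum_nonneg fun y _ ↦ mul_nonneg (hg z y) (hf y x)

lemma pureCh_nonneg [DecidableEq Y] (φ : X → Y) : 0 ≤ pureCh φ := by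
  intro y x
  unfold pureCh
  split_ifs <;> simp

end Nonneg

section RelEnt2

variable {X Y X' Y' : Type*} [Fintype X] [Fintype Y] [Fintype X'] [Fintype Y']

/-- The 2-relative entropy of a square with top edge `f`, bottom edge `f'` and left edge `g`,
for a distribution `p` on `X` and backward channels `s : X' ⇝ X` and `t : Y' ⇝ Y`. Here `g` may be
any channel; a function `μ` is the case `g = pureCh μ`. -/
noncomputable def relEnt2 (p : X → ℝ) (g : X' → X → ℝ) (s : X → X' → ℝ) (f : Y → X → ℝ)
    (f' : Y' → X' → ℝ) (t : Y → Y' → ℝ) : ℝ≥0∞ :=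
  relEnt p (push s (push g p)) +
    ∑ x, ENNReal.ofReal (p x) * relEnt (fun y ↦ f y x) (fun y ↦ chComp t (chComp f' g) y x)

theorem relEnt2_lowerSemicontinuous_general :
    LowerSemicontinuousOn
      (fun (p, g, s, f, f', t) ↦ relEnt2 p g s f f' t :
        (X → ℝ) × (X' → X → ℝ) × (X → X' → ℝ) × (Y → X → ℝ) × (Y' → X' → ℝ) × (Y → Y' → ℝ) →
          ℝ≥0∞)
      (Ici 0) := by
  refine LowerSemicontinuousOn.add ?_ (lowerSemicontinuousOn_sum fun x _ ↦
    lowerSemicontinuousOn_ennreal_mul ?_ ?_)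
  · exact lowerSemicontinuousOn_relEnt (by fun_prop) (by unfold push; fun_prop)
      (fun _ hz ↦ hz.1) (fun _ ⟨hp, hg, hs, _⟩ ↦ push_nonneg hs (push_nonneg hg hp))
  · exact (ENNReal.continuous_ofReal.comp (by fun_prop)).lowerSemicontinuous.lowerSemicontinuousOn _
  · exact lowerSemicontinuousOn_relEnt (by fun_prop) (by unfold chComp; fun_prop)
      (fun _ ⟨_, _, _, hf, _⟩ y ↦ hf y x)
      (fun _ ⟨_, hg, _, _, hf', ht⟩ y ↦ chComp_nonneg ht (chComp_nonneg hf' hg) y x)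

end RelEnt2

/-- 2-relative entropy is lower semicontinuous. -/
theorem relEnt2_lowerSemicontinuous {X Y X' Y' : Type*}
    [Fintype X] [Fintype Y] [Fintype X'] [Fintype Y']
    [DecidableEq X'] [DecidableEq Y']
    (μ : X → X') (ν : Y → Y') (f : Y → X → ℝ) (f' : Y' → X' → ℝ)
    (hf : IsChannel f) (hf' : IsChannel f')
    (hcomm : chComp (pureCh ν) f = chComp f' (pureCh μ))
    (p : X → ℝ) (pn : ℕ → X → ℝ)
    (s : X → X' → ℝ) (sn : ℕ → X → X' → ℝ)
    (t : Y → Y' → ℝ) (tn : ℕ → Y → Y' → ℝ)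
    (hp : IsDist p) (hpn : ∀ n, IsDist (pn n))
    (hs : IsSection μ s) (hsn : ∀ n, IsSection μ (sn n))
    (ht : IsSection ν t) (htn : ∀ n, IsSection ν (tn n))
    (hpconv : ∀ x, Filter.Tendsto (fun n => pn n x) Filter.atTop (nhds (p x)))
    (hsconv : ∀ x x', Filter.Tendsto (fun n => sn n x x') Filter.atTop (nhds (s x x')))
    (htconv : ∀ y y', Filter.Tendsto (fun n => tn n y y') Filter.atTop (nhds (t y y'))) :
    relEnt p (push s (push (pureCh μ) p))
      + (∑ x, ENNReal.ofReal (p x) *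
          relEnt (fun y => f y x) (fun y => chComp t (chComp f' (pureCh μ)) y x))
      ≤ Filter.liminf
          (fun n => relEnt (pn n) (push (sn n) (push (pureCh μ) (pn n)))
            + ∑ x, ENNReal.ofReal (pn n x) *
                relEnt (fun y => f y x)
                  (fun y => chComp (tn n) (chComp f' (pureCh μ)) y x))
          Filter.atTop := by
  have hconv : Tendsto (fun n ↦ (pn n, pureCh μ, sn n, f, f', tn n)) atTop
      (𝓝 (p, pureCh μ, s, f, f', t)) := by
    simpa [Prod.tendsto_iff, tendsto_pi_nhds] using ⟨hpconv, hsconv, htconv⟩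
  exact (le_liminf_comp_of_lowerSemicontinuousOn relEnt2_lowerSemicontinuous_general hconv
    (.of_forall fun n ↦ ⟨(hpn n).1, pureCh_nonneg μ, (hsn n).1.1, hf.1, hf'.1, (htn n).1.1⟩)
    ⟨hp.1, pureCh_nonneg μ, hs.1.1, hf.1, hf'.1, ht.1.1⟩ :)
end
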